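/- arXiv:2509.06152 — 2 statements merged into one kernel-verified Lean document; each statement's English description precedes it below -/
import Mathlib

section
/- The Dirichlet series Z(s) := Σ_{m ≡ 1 (mod 3)} N(m)^{−s} · ∏_{π ≡ 1 (mod 3), π | m} (1 + N(π)^{−1})^{−1} (sum over m ∈ ℤ[ω], m ≡ 1 mod 3) satisfies, for Re(s) > 1, Z(s) = (1 − 3^{−s})·ζ_{ℚ(ω)}(s)·∏_{π ≡ 1 (mod 3)} (1 − 1/(N(π)^s (N(π)+1))). -/
open Complex

noncomputable section

/-- The primitive cube root of unity `ω = e^{2πi/3}`. -/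
def ω : ℂ := Complex.exp (2 * Real.pi * Complex.I / 3)

/-- The ring of Eisenstein integers `ℤ[ω]`, as a subring of `ℂ`. -/
def Zω : Subring ℂ := Subring.closure {ω}

/-- `ω` as an element of `ℤ[ω]`. -/
def ωZ : Zω := ⟨ω, Subring.subset_closure rfl⟩

/-- The ramified prime `λ = 1 - ω` of `ℤ[ω]`. -/
def lamZ : Zω := 1 - ωZ

/-- The norm `N(a) = |a|²` from `ℚ(ω)` to `ℚ`, restricted to `ℤ[ω]`. -/
def Nm (a : Zω) : ℝ := Complex.normSq (a : ℂ)

/-- The norm of an Eisenstein integer, as a natural number. -/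
def NmNat (a : Zω) : ℕ := ⌊Complex.normSq (a : ℂ)⌋₊

/-- `e(z) = e^{2πi Tr(z)} = e^{2πi (z + z̄)}`. -/
def eE (z : ℂ) : ℂ := Complex.exp (2 * Real.pi * Complex.I * (z + (starRingEnd ℂ) z))

/-- `χ` is the cubic residue symbol `χ a b = (a/b)₃` on `ℤ[ω]`:
it is multiplicative in both arguments, and at prime moduli `π` coprime to `3`
it is given by the power-residue congruence
`(a/π)₃ ≡ a^{(N(π)-1)/3} (mod π)`, with values among `{1, ω, ω²}` (and `0` when `π ∣ a`). -/
def IsCubicSymbol (χ : Zω → Zω → Zω) : Prop :=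
  (∀ a b₁ b₂ : Zω, χ a (b₁ * b₂) = χ a b₁ * χ a b₂) ∧
  (∀ a₁ a₂ b : Zω, χ (a₁ * a₂) b = χ a₁ b * χ a₂ b) ∧
  (∀ a : Zω, χ a 1 = 1) ∧
  (∀ a π : Zω, Prime π → IsCoprime π 3 →
    (π ∣ a → χ a π = 0) ∧
    (¬ π ∣ a →
      ((χ a π : ℂ) = 1 ∨ (χ a π : ℂ) = ω ∨ (χ a π : ℂ) = ω ^ 2) ∧
      π ∣ (a ^ ((NmNat π - 1) / 3) - χ a π)))

/-- The shifted cubic Gauss sum `g(ν,c) = Σ_{d mod c} (d/c)₃ e(νd/c)`,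
relative to a cubic residue symbol `χ`. -/
def gauss (χ : Zω → Zω → Zω) (ν c : Zω) : ℂ :=
  ∑' q : Zω ⧸ Ideal.span {c},
    ((χ (Quotient.out q) c : Zω) : ℂ) * eE (((ν * Quotient.out q : Zω) : ℂ) / (c : ℂ))

/-- `μ` is the Möbius function of `ℤ[ω]`. -/
def IsMoebiusZω (μ : Zω → ℤ) : Prop :=
  μ 1 = 1 ∧
  (∀ a : Zω, ¬ Squarefree a → μ a = 0) ∧
  (∀ a b : Zω, IsCoprime a b → μ (a * b) = μ a * μ b) ∧
  (∀ π : Zω, Prime π → μ π = -1)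

end

/-!
Expand each finite product `∏_{π ∣ m} (1 + b π)`, where `1 + b π = (1 + N(π)⁻¹)⁻¹`, into a sum over
the finite sets `S` of primary primes dividing `m`. Since `∏ S` then divides `m`, the double sum is
absolutely convergent after the substitution `m = n * ∏ S`, and it splits as
`(∑ n, N(n)^{-s}) * ∑ S, ∏_{π ∈ S} N(π)^{-s} b π`, whose second factor is the Euler product.
Every nonzero ideal is generated by a unique `λ ^ k * n` with `n ≡ 1 (mod 3)`, so summing the
geometric series over `k` identifies `∑ n, N(n)^{-s}` with `(1 - 3^{-s}) ζ(s)`.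
-/

section DirichletSeries

variable {M ι R : Type*}

theorem subset_of_prod_indicator_ne_zero [CommMonoidWithZero R] {s : Set ι} {b : ι → R}
    {S : Finset ι} (h : ∏ i ∈ S, s.indicator b i ≠ 0) : ↑S ⊆ s := fun _ hi =>
  by_contra fun his => h <| Finset.prod_eq_zero hi (Set.indicator_of_notMem his b)

theorem summable_prod_indicator [CommSemiring R] [TopologicalSpace R] {s : Set ι}
    (hs : s.Finite) (b : ι → R) :
    Summable fun S : Finset ι => ∏ i ∈ S, s.indicator b i :=
  summable_of_hasFiniteSupport <| hs.toFinset.powerset.finite_toSet.subset fun S hS => by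
    simpa [← Finset.coe_subset] using subset_of_prod_indicator_ne_zero hS

theorem tprod_subtype_one_add_eq_tsum [CommSemiring R] [TopologicalSpace R] [T2Space R]
    {s : Set ι} (hs : s.Finite) (b : ι → R) :
    ∏' i : s, (1 + b i) = ∑' S : Finset ι, ∏ i ∈ S, s.indicator b i := by
  rw [tprod_subtype s fun i => 1 + b i, ← tprod_one_add (summable_prod_indicator hs b)]
  refine tprod_congr fun i => ?_
  by_cases hi : i ∈ s <;> simp [hi]

variable [CommMonoid M]

/-- The general term `f n * ∏ i ∈ S, b i`, restricted to the pairs `(n, S)` with `p i ∣ n` for all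
`i ∈ S`, of the double series obtained by expanding the finite products in
`∑ n, f n * ∏_{p i ∣ n} (1 + b i)`. -/
noncomputable def divisorTerm [CommMonoidWithZero R] (f : M → R) (p : ι → M) (b : ι → R)
    (x : M × Finset ι) : R :=
  f x.1 * ∏ i ∈ x.2, {i | p i ∣ x.1}.indicator b i

/-- The map `(m, S) ↦ (m * ∏ i ∈ S, p i, S)`, which parametrizes the pairs `(n, S)` for which
`∏ i ∈ S, p i` divides `n`. -/
def mulProd (p : ι → M) (x : M × Finset ι) : M × Finset ι :=
  (x.1 * ∏ i ∈ x.2, p i, x.2)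

theorem mulProd_injective [IsCancelMul M] (p : ι → M) : Function.Injective (mulProd p) := by
  rintro ⟨m, S⟩ ⟨m', S'⟩ h
  obtain ⟨hmul, rfl⟩ := Prod.mk.inj h
  exact Prod.ext (mul_right_cancel hmul) rfl

theorem divisorTerm_mulProd [CommMonoidWithZero R] (f : M →* R) (p : ι → M) (b : ι → R)
    (x : M × Finset ι) :
    divisorTerm f p b (mulProd p x) = f x.1 * ∏ i ∈ x.2, f (p i) * b i := by
  have hdvd (i) (hi : i ∈ x.2) : i ∈ {i | p i ∣ (mulProd p x).1} :=
    (Finset.dvd_prod_of_mem p hi).mul_left _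
  have hind : ∏ i ∈ x.2, {i | p i ∣ (mulProd p x).1}.indicator b i = ∏ i ∈ x.2, b i :=
    Finset.prod_congr rfl fun i hi => Set.indicator_of_mem (hdvd i hi) b
  calc divisorTerm f p b (mulProd p x)
      = f (x.1 * ∏ i ∈ x.2, p i) * ∏ i ∈ x.2, b i := congrArg (f _ * ·) hind
    _ = f x.1 * ∏ i ∈ x.2, f (p i) * b i := by
        rw [map_mul, map_prod, Finset.prod_mul_distrib, mul_assoc]

theorem support_divisorTerm_subset_range_mulProd [CommMonoidWithZero R] (f : M → R) {p : ι → M}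
    (b : ι → R)
    (hp : ∀ (S : Finset ι) (n : M), (∀ i ∈ S, p i ∣ n) → ∏ i ∈ S, p i ∣ n) :
    Function.support (divisorTerm f p b) ⊆ Set.range (mulProd p) := by
  rintro ⟨n, S⟩ hF
  have hdvd := subset_of_prod_indicator_ne_zero (right_ne_zero_of_mul hF)
  obtain ⟨m, rfl⟩ := hp S n fun i hi => hdvd hi
  exact ⟨(m, S), Prod.ext (mul_comm _ _) rfl⟩

theorem tsum_divisorTerm_right [CommSemiring R] [TopologicalSpace R] [IsTopologicalSemiring R]
    [T2Space R] (f : M → R) {p : ι → M} (b : ι → R) {n : M} (hn : {i | p i ∣ n}.Finite) :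
    ∑' S, divisorTerm f p b (n, S) = f n * ∏' i : {i // p i ∣ n}, (1 + b i) :=
  ((summable_prod_indicator hn b).tsum_mul_left (f n)).trans
    (congrArg (f n * ·) (tprod_subtype_one_add_eq_tsum hn b).symm)

theorem tsum_mul_tprod_dvd [IsCancelMul M] [NormedCommRing R] [NormOneClass R] [CompleteSpace R]
    (f : M →* R) {p : ι → M} {b : ι → R}
    (hp : ∀ (S : Finset ι) (n : M), (∀ i ∈ S, p i ∣ n) → ∏ i ∈ S, p i ∣ n)
    (hfin : ∀ n : M, {i | p i ∣ n}.Finite)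
    (hf : Summable fun m => ‖f m‖) (hb : Summable fun i => ‖f (p i) * b i‖) :
    ∑' n, f n * ∏' i : {i // p i ∣ n}, (1 + b i) =
      (∑' m, f m) * ∏' i, (1 + f (p i) * b i) := by
  have hsupport := support_divisorTerm_subset_range_mulProd f b hp
  have hprod : Summable fun S : Finset ι => ‖∏ i ∈ S, f (p i) * b i‖ :=
    (summable_finsetProd_of_summable_nonneg (fun _ => norm_nonneg _) hb).of_nonneg_of_le
      (fun _ => norm_nonneg _) fun S => S.norm_prod_le _
  have hterm : Summable (divisorTerm f p b) :=
    ((mulProd_injective p).summable_iff (Function.support_subset_iff'.mp hsupport)).mp <|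
      (summable_mul_of_summable_norm hf hprod).congr fun x => (divisorTerm_mulProd f p b x).symm
  calc ∑' n, f n * ∏' i : {i // p i ∣ n}, (1 + b i)
      = ∑' n, ∑' S, divisorTerm f p b (n, S) :=
        tsum_congr fun n => (tsum_divisorTerm_right f b (hfin n)).symm
    _ = ∑' x, divisorTerm f p b x := hterm.tsum_prod.symm
    _ = ∑' x, divisorTerm f p b (mulProd p x) := ((mulProd_injective p).tsum_eq hsupport).symm
    _ = (∑' m, f m) * ∑' S : Finset ι, ∏ i ∈ S, f (p i) * b i := by
        rw [tsum_mul_tsum_of_summable_norm hf hprod, tsum_congr (divisorTerm_mulProd f p b)]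
    _ = (∑' m, f m) * ∏' i, (1 + f (p i) * b i) := by
        rw [tprod_one_add hprod.of_norm]

end DirichletSeries

/-! ### The ring of Eisenstein integers -/

theorem ω_eq : ω = ⟨-1 / 2, √3 / 2⟩ := by
  have h : (2 * Real.pi * I / 3 : ℂ) = ((Real.pi - Real.pi / 3 : ℝ) : ℂ) * I := by
    push_cast; ring
  apply Complex.ext
  · rw [ω, h, exp_ofReal_mul_I_re, Real.cos_pi_sub, Real.cos_pi_div_three]
    norm_num
  · rw [ω, h, exp_ofReal_mul_I_im, Real.sin_pi_sub, Real.sin_pi_div_three]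

theorem normSq_add_mul_ω (u v : ℝ) : normSq (u + v * ω) = u ^ 2 - u * v + v ^ 2 := by
  have h3 : √3 * √3 = 3 := Real.mul_self_sqrt (by norm_num)
  simp only [normSq_apply, ω_eq, add_re, add_im, mul_re, mul_im, ofReal_re, ofReal_im]
  linear_combination v ^ 2 / 4 * h3

theorem exists_eq_add_mul_ω (z : ℂ) : ∃ u v : ℝ, z = u + v * ω := by
  refine ⟨z.re + z.im / √3, 2 * z.im / √3, Complex.ext ?_ ?_⟩ <;>
    simp only [ω_eq, ofReal_div, ofReal_mul, ofReal_add, ofReal_ofNat, add_re, add_im, mul_re,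
      mul_im, div_ofReal_re, div_ofReal_im, ofReal_re, ofReal_im, re_ofNat, im_ofNat] <;>
    field

theorem ω_sq_add_ω_add_one : ω ^ 2 + ω + 1 = 0 := by
  have h : IsPrimitiveRoot ω 3 := Complex.isPrimitiveRoot_exp 3 (by norm_num)
  have hsum := h.geom_sum_eq_zero (by norm_num)
  simp only [Finset.sum_range_succ, Finset.sum_range_zero, pow_zero, pow_one] at hsum
  linear_combination hsum

namespace Zω

theorem ωZ_sq_add_ωZ_add_one : ωZ ^ 2 + ωZ + 1 = 0 := Subtype.ext ω_sq_add_ω_add_one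

/-- The quadratic algebra `ℤ[X] / (X² + X + 1)`, the abstract model of `ℤ[ω]`. -/
abbrev Model : Type := QuadraticAlgebra ℤ (-1) (-1)

/-- The algebra map from the abstract model that sends `x + y X` to `x + y ω`. -/
noncomputable def ofModel : Model →ₐ[ℤ] Zω :=
  QuadraticAlgebra.lift ⟨ωZ, by
    simp only [neg_smul, one_smul]
    linear_combination ωZ_sq_add_ωZ_add_one⟩

theorem coe_ofModel (z : Model) : (ofModel z : ℂ) = z.re + z.im * ω := by
  simp [ofModel, ωZ]

theorem Nm_ofModel (z : Model) : Nm (ofModel z) = z.norm := by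
  have h := normSq_add_mul_ω z.re z.im
  rw [Nm, coe_ofModel, QuadraticAlgebra.norm_def]
  push_cast at h ⊢
  linear_combination h

theorem ofModel_injective : Function.Injective ofModel := by
  refine (injective_iff_map_eq_zero ofModel).mpr fun z hz => ?_
  have him : z.im = 0 := by
    have := congrArg (fun w : Zω => (w : ℂ).im) hz
    simpa [coe_ofModel, ω_eq] using this
  have hre : z.re = 0 := by
    have := congrArg (fun w : Zω => (w : ℂ).re) hz
    simpa [coe_ofModel, him] using this
  exact QuadraticAlgebra.ext hre him

theorem ofModel_surjective : Function.Surjective ofModel := by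
  have hle : Zω ≤ (Zω.subtype.comp (ofModel : Model →+* Zω)).range :=
    Subring.closure_le.mpr <| Set.singleton_subset_iff.mpr
      ⟨QuadraticAlgebra.omega, by simp [coe_ofModel]⟩
  rintro ⟨x, hx⟩
  obtain ⟨z, hz⟩ := hle hx
  exact ⟨z, Subtype.ext hz⟩

/-- The abstract model is isomorphic to the concrete subring `ℤ[ω]` of `ℂ`. -/
noncomputable def modelEquiv : Model ≃ₐ[ℤ] Zω :=
  AlgEquiv.ofBijective ofModel ⟨ofModel_injective, ofModel_surjective⟩

instance : Module.Finite ℤ Zω := .equiv modelEquiv.toLinearEquiv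

instance : Module.Free ℤ Zω := .of_equiv modelEquiv.toLinearEquiv

theorem finrank_eq_two : Module.finrank ℤ Zω = 2 :=
  modelEquiv.toLinearEquiv.finrank_eq.symm.trans (QuadraticAlgebra.finrank_eq_two _ _)

theorem Nm_eq_algebraNorm (x : Zω) : Nm x = Algebra.norm ℤ x := by
  obtain ⟨z, rfl⟩ := modelEquiv.surjective x
  rw [Algebra.norm_eq_of_algEquiv, Algebra.norm_apply]
  exact (Nm_ofModel z).trans
    (congrArg _ (QuadraticAlgebra.det_toLinearMap_eq_norm z).symm)

theorem Nm_eq_norm_sq (x : Zω) : Nm x = ‖(x : ℂ)‖ ^ 2 := normSq_eq_norm_sq _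

theorem Nm_nonneg (x : Zω) : 0 ≤ Nm x := normSq_nonneg _

theorem Nm_eq_zero {x : Zω} : Nm x = 0 ↔ x = 0 := normSq_eq_zero.trans (Subring.coe_eq_zero_iff Zω)

theorem Nm_zero : Nm 0 = 0 := normSq_zero

theorem Nm_one : Nm 1 = 1 := normSq_one

theorem Nm_mul (x y : Zω) : Nm (x * y) = Nm x * Nm y := normSq_mul _ _

theorem Nm_eq_natAbs (x : Zω) : Nm x = (Algebra.norm ℤ x).natAbs := by
  have h : 0 ≤ Algebra.norm ℤ x := by exact_mod_cast Nm_eq_algebraNorm x ▸ Nm_nonneg x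
  rw [Nm_eq_algebraNorm, Nat.cast_natAbs, abs_of_nonneg h]

theorem one_le_Nm {x : Zω} (hx : x ≠ 0) : 1 ≤ Nm x := by
  have h : Nm x ≠ 0 := Nm_eq_zero.not.mpr hx
  rw [Nm_eq_natAbs] at h ⊢
  exact_mod_cast Nat.one_le_iff_ne_zero.mpr (by exact_mod_cast h)

theorem Nm_eq_one_of_isUnit {u : Zω} (hu : IsUnit u) : Nm u = 1 := by
  rw [Nm_eq_natAbs, Int.isUnit_iff_natAbs_eq.mp (hu.map (Algebra.norm ℤ)), Nat.cast_one]

theorem Nm_lamZ : Nm lamZ = 3 := by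
  have h := normSq_add_mul_ω 1 (-1)
  push_cast at h
  rw [Nm, show (lamZ : ℂ) = 1 + -1 * ω by simp [lamZ, ωZ, sub_eq_add_neg], h]
  norm_num

theorem Nm_three : Nm 3 = 9 := by
  rw [Nm, show ((3 : Zω) : ℂ) = 3 from rfl, normSq_ofNat]
  norm_num

/-- The completely multiplicative function `x ↦ N(x) ^ s` on `ℤ[ω]`. -/
noncomputable def normCpow (s : ℂ) : Zω →* ℂ where
  toFun x := (Nm x : ℂ) ^ s
  map_one' := by rw [Nm_one, ofReal_one, one_cpow]
  map_mul' x y := by rw [Nm_mul, ofReal_mul, mul_cpow_ofReal_nonneg (Nm_nonneg x) (Nm_nonneg y)]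

theorem normCpow_apply (s : ℂ) (x : Zω) : normCpow s x = (Nm x : ℂ) ^ s := rfl

theorem norm_normCpow (s : ℂ) {x : Zω} (hx : x ≠ 0) : ‖normCpow s x‖ = Nm x ^ s.re :=
  norm_cpow_eq_rpow_re_of_pos (zero_lt_one.trans_le (one_le_Nm hx)) s

theorem exists_normSq_sub_lt_one (z : ℂ) : ∃ q : Zω, normSq (z - q) < 1 := by
  obtain ⟨u, v, rfl⟩ := exists_eq_add_mul_ω z
  refine ⟨ofModel ⟨round u, round v⟩, ?_⟩
  have hu := abs_le.mp (abs_sub_round u)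
  have hv := abs_le.mp (abs_sub_round v)
  have h : (u + v * ω - ofModel ⟨round u, round v⟩ : ℂ) =
      ((u - round u : ℝ) : ℂ) + ((v - round v : ℝ) : ℂ) * ω := by
    rw [coe_ofModel]; push_cast; ring
  rw [h, normSq_add_mul_ω]
  nlinarith

theorem exists_Nm_sub_mul_lt (x : Zω) {a : Zω} (ha : a ≠ 0) : ∃ q : Zω, Nm (x - q * a) < Nm a := by
  have ha' : (a : ℂ) ≠ 0 := (Subring.coe_eq_zero_iff Zω).not.mpr ha
  obtain ⟨q, hq⟩ := exists_normSq_sub_lt_one (x / a)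
  refine ⟨q, ?_⟩
  have h : ((x - q * a : Zω) : ℂ) = (x / a - q) * a := by
    push_cast; field
  rw [Nm, h, normSq_mul]
  exact mul_lt_of_lt_one_left (normSq_pos.mpr ha') hq

instance : IsPrincipalIdealRing Zω where
  principal I := by
    rcases eq_or_ne I ⊥ with rfl | hI
    · infer_instance
    obtain ⟨b, hb⟩ := Submodule.exists_mem_ne_zero_of_ne_bot hI
    obtain ⟨a, ⟨haI, ha0⟩, hmin⟩ :=
      (measure fun x : Zω => (Algebra.norm ℤ x).natAbs).wf.has_min {x | x ∈ I ∧ x ≠ 0} ⟨b, hb⟩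
    refine ⟨a, le_antisymm (fun x hx => ?_) ((Ideal.span_singleton_le_iff_mem I).mpr haI)⟩
    obtain ⟨q, hq⟩ := exists_Nm_sub_mul_lt x ha0
    have hr : x - q * a = 0 := by
      by_contra hr
      rw [Nm_eq_natAbs, Nm_eq_natAbs, Nat.cast_lt] at hq
      exact hmin _ ⟨sub_mem hx (I.mul_mem_left q haI), hr⟩ hq
    exact Ideal.mem_span_singleton'.mpr ⟨q, (sub_eq_zero.mp hr).symm⟩

theorem card_quotient_span_singleton (a : Zω) :
    (Nat.card (Zω ⧸ Ideal.span {a}) : ℝ) = Nm a := by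
  rw [Nm_eq_natAbs, ← Ideal.absNorm_span_singleton]
  rfl

instance : DiscreteTopology Zω.toAddSubgroup.toIntSubmodule :=
  .of_forall_le_norm one_pos fun x hx => by
    have h : 1 ≤ Nm ⟨x, x.2⟩ := one_le_Nm fun h => hx (Subtype.ext (congrArg Subtype.val h))
    rwa [Nm_eq_norm_sq, one_le_sq_iff₀ (norm_nonneg _)] at h

theorem summable_Nm_rpow {r : ℝ} (hr : r < -1) : Summable fun x : Zω => Nm x ^ r := by
  let L : Submodule ℤ ℂ := Zω.toAddSubgroup.toIntSubmodule
  have hrank : Module.finrank ℤ L = 2 := finrank_eq_two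
  have hL : Summable fun x : L => ‖x‖ ^ (2 * r) :=
    ZLattice.summable_norm_rpow L (2 * r) (by rw [hrank]; push_cast; linarith)
  refine Summable.congr (β := Zω) hL fun x => ?_
  rw [Nm_eq_norm_sq, ← Real.rpow_natCast_mul (norm_nonneg _)]
  rfl

/-! ### Elements congruent to `1` modulo `3` -/

theorem lamZ_dvd_three : lamZ ∣ 3 :=
  ⟨1 - ωZ ^ 2, by rw [lamZ]; linear_combination -(ωZ - 2) * ωZ_sq_add_ωZ_add_one⟩

theorem three_dvd_lamZ_sq : 3 ∣ lamZ ^ 2 :=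
  ⟨-ωZ, by rw [lamZ]; linear_combination ωZ_sq_add_ωZ_add_one⟩

theorem lamZ_ne_zero : lamZ ≠ 0 := fun h => by
  have := Nm_lamZ
  rw [h, Nm_zero] at this
  norm_num at this

theorem not_isUnit_lamZ : ¬ IsUnit lamZ := fun h => by
  have := Nm_lamZ
  rw [Nm_eq_one_of_isUnit h] at this
  norm_num at this

theorem isUnit_ωZ : IsUnit ωZ :=
  IsUnit.of_mul_eq_one (ωZ ^ 2) (by linear_combination (ωZ - 1) * ωZ_sq_add_ωZ_add_one)

theorem exists_lamZ_dvd_sub_intCast (z : Zω) : ∃ n : ℤ, lamZ ∣ z - n := by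
  obtain ⟨⟨a, b⟩, rfl⟩ := ofModel_surjective z
  refine ⟨a + b, -b, Subtype.ext ?_⟩
  simp only [AddSubgroupClass.coe_sub, coe_ofModel, lamZ, Subring.coe_mul, Subring.coe_intCast,
    Subring.coe_neg, Subring.coe_one, ωZ]
  push_cast
  ring

theorem lamZ_dvd_or_dvd_sub_one_or_dvd_add_one (z : Zω) :
    lamZ ∣ z ∨ lamZ ∣ z - 1 ∨ lamZ ∣ z + 1 := by
  obtain ⟨n, hn⟩ := exists_lamZ_dvd_sub_intCast z
  have dvd_sub_of_dvd (r : ℤ) (hr : (3 : ℤ) ∣ n - r) : lamZ ∣ z - r := by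
    have h3 : (3 : Zω) ∣ n - r := by exact_mod_cast map_dvd (Int.castRingHom Zω) hr
    simpa only [sub_add_sub_cancel] using dvd_add hn (lamZ_dvd_three.trans h3)
  rcases (by lia : (3 : ℤ) ∣ n - 0 ∨ (3 : ℤ) ∣ n - 1 ∨ (3 : ℤ) ∣ n - (-1)) with h | h | h
  · exact .inl (by simpa using dvd_sub_of_dvd 0 h)
  · exact .inr (.inl (by simpa using dvd_sub_of_dvd 1 h))
  · exact .inr (.inr (by simpa using dvd_sub_of_dvd (-1) h))

/-- The submonoid of Eisenstein integers congruent to `1` modulo `3`. -/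
def primary : Submonoid Zω where
  carrier := {m | 3 ∣ m - 1}
  one_mem' := by simp
  mul_mem' {m n} hm hn := by
    change 3 ∣ m * n - 1
    rw [show m * n - 1 = (m - 1) * n + (n - 1) by ring]
    exact dvd_add (hm.mul_right n) hn

theorem mem_primary_of_mul_mem {m n : Zω} (hm : m ∈ primary) (hmn : m * n ∈ primary) :
    n ∈ primary := by
  change 3 ∣ n - 1
  rw [show n - 1 = (m * n - 1) - (m - 1) * n by ring]
  exact dvd_sub hmn (hm.mul_right n)

theorem not_lamZ_dvd_of_mem_primary {m : Zω} (hm : m ∈ primary) : ¬ lamZ ∣ m := fun h =>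
  not_isUnit_lamZ <| isUnit_of_dvd_one <| by
    simpa only [sub_sub_cancel] using dvd_sub h (lamZ_dvd_three.trans hm)

theorem ne_zero_of_mem_primary {m : Zω} (hm : m ∈ primary) : m ≠ 0 := fun h =>
  not_lamZ_dvd_of_mem_primary hm (h ▸ dvd_zero _)

theorem eq_one_of_isUnit_of_mem_primary {u : Zω} (hu : IsUnit u) (hu3 : u ∈ primary) : u = 1 := by
  obtain ⟨c, hc⟩ := hu3
  have hnorm : ‖(u : ℂ)‖ = 1 := by
    rw [← sq_eq_sq₀ (norm_nonneg _) zero_le_one, ← Nm_eq_norm_sq, Nm_eq_one_of_isUnit hu, one_pow]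
  have hle : Nm (u - 1) ≤ 2 ^ 2 := by
    rw [Nm_eq_norm_sq]
    gcongr
    calc ‖(u : ℂ) - 1‖ ≤ ‖(u : ℂ)‖ + ‖(1 : ℂ)‖ := norm_sub_le _ _
      _ = 2 := by rw [hnorm, norm_one]; norm_num
  rw [hc, Nm_mul, Nm_three] at hle
  have hc0 : c = 0 := by
    by_contra h
    linarith [one_le_Nm h]
  exact sub_eq_zero.mp (by rw [hc, hc0, mul_zero])

theorem eq_of_associated {m n : primary} (h : Associated (m : Zω) n) : m = n := by
  obtain ⟨u, hu⟩ := h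
  have hu1 := eq_one_of_isUnit_of_mem_primary u.isUnit
    (mem_primary_of_mul_mem m.2 (hu ▸ n.2))
  exact Subtype.ext (by rw [← hu, hu1, mul_one])

theorem coe_dvd_coe {m n : primary} : (m : Zω) ∣ n ↔ m ∣ n :=
  ⟨fun ⟨c, hc⟩ => ⟨⟨c, mem_primary_of_mul_mem m.2 (hc ▸ n.2)⟩, Subtype.ext hc⟩,
    fun h => map_dvd primary.subtype h⟩

instance : IsCancelMul primary :=
  have : IsLeftCancelMul primary := ⟨fun m _ _ h => Subtype.ext <|
    mul_left_cancel₀ (ne_zero_of_mem_primary m.2) (congrArg Subtype.val h)⟩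
  CommMagma.IsLeftCancelMul.toIsCancelMul _

theorem exists_primary_associated_of_mul_sub_one {u z : Zω} (hu : IsUnit u)
    (h : lamZ ^ 2 ∣ u * z - 1) : ∃ m : primary, Associated z m :=
  ⟨⟨u * z, three_dvd_lamZ_sq.trans h⟩, associated_unit_mul_right z u hu⟩

theorem exists_primary_associated_of_lamZ_dvd_sub_one {z : Zω} (hz : lamZ ∣ z - 1) :
    ∃ m : primary, Associated z m := by
  obtain ⟨c, hc⟩ := hz
  -- Modulo `λ²`, `z` is `1`, `1 + λ` or `1 - λ`, and `ω (1 + λ) ≡ ω² (1 - λ) ≡ 1`.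
  rcases lamZ_dvd_or_dvd_sub_one_or_dvd_add_one c with ⟨d, hd⟩ | ⟨d, hd⟩ | ⟨d, hd⟩
  · exact exists_primary_associated_of_mul_sub_one isUnit_one
      ⟨d, by linear_combination hc + lamZ * hd⟩
  · refine exists_primary_associated_of_mul_sub_one isUnit_ωZ ⟨ωZ * d - 1, ?_⟩
    rw [lamZ] at *
    linear_combination ωZ * hc + ωZ * (1 - ωZ) * hd
  · refine exists_primary_associated_of_mul_sub_one (isUnit_ωZ.pow 2) ⟨ωZ ^ 2 * d, ?_⟩
    rw [lamZ] at *
    linear_combination ωZ ^ 2 * hc + ωZ ^ 2 * (1 - ωZ) * hd + (ωZ - 1) * ωZ_sq_add_ωZ_add_one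

theorem exists_primary_associated {z : Zω} (hz : ¬ lamZ ∣ z) :
    ∃ m : primary, Associated z m := by
  rcases (lamZ_dvd_or_dvd_sub_one_or_dvd_add_one z).resolve_left hz with h | h
  · exact exists_primary_associated_of_lamZ_dvd_sub_one h
  · obtain ⟨m, hm⟩ := exists_primary_associated_of_lamZ_dvd_sub_one (z := -z)
      (by rw [← neg_add']; exact h.neg_right)
    exact ⟨m, (Associated.refl z).neg_right.trans hm⟩

/-- The primes of `ℤ[ω]` congruent to `1` modulo `3`. -/
abbrev PrimaryPrime : Type := {π : Zω // Prime π ∧ 3 ∣ π - 1}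

namespace PrimaryPrime

/-- A primary prime, as a primary element. -/
def toPrimary (π : PrimaryPrime) : primary := ⟨π, π.2.2⟩

theorem toPrimary_injective : Function.Injective toPrimary := fun _ _ h =>
  Subtype.ext (congrArg primary.subtype h)

theorem isRelPrime {π ρ : PrimaryPrime} (h : π ≠ ρ) : IsRelPrime (π : Zω) ρ :=
  π.2.1.irreducible.isRelPrime_iff_not_dvd.mpr fun hdvd =>
    h <| toPrimary_injective <| eq_of_associated <| (π.2.1.dvd_prime_iff_associated ρ.2.1).mp hdvd

theorem prod_toPrimary_dvd (S : Finset PrimaryPrime) (n : primary)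
    (h : ∀ π ∈ S, toPrimary π ∣ n) : ∏ π ∈ S, toPrimary π ∣ n := by
  rw [← coe_dvd_coe, Submonoid.coe_finsetProd]
  exact Finset.prod_dvd_of_isRelPrime (fun _ _ _ _ => isRelPrime)
    fun π hπ => coe_dvd_coe.mpr (h π hπ)

theorem finite_setOf_toPrimary_dvd (n : primary) : {π | toPrimary π ∣ n}.Finite := by
  have hn : Ideal.span {(n : Zω)} ≠ 0 :=
    Ideal.span_singleton_eq_bot.not.mpr (ne_zero_of_mem_primary n.2)
  have hfin : {I | I ∣ Ideal.span {(n : Zω)}}.Finite :=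
    Set.finite_coe_iff.mp (@Finite.of_fintype _ (UniqueFactorizationMonoid.fintypeSubtypeDvd _ hn))
  have hmaps : Set.MapsTo (fun π : PrimaryPrime => Ideal.span {(π : Zω)})
      {π | toPrimary π ∣ n} {I | I ∣ Ideal.span {(n : Zω)}} := fun π hπ =>
    Ideal.dvd_iff_le.mpr <| Ideal.span_singleton_le_span_singleton.mpr <| coe_dvd_coe.mpr hπ
  have hinj : Function.Injective fun π : PrimaryPrime => Ideal.span {(π : Zω)} := fun _ _ h =>
    toPrimary_injective <| eq_of_associated <| Ideal.span_singleton_eq_span_singleton.mp h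
  exact hfin.of_injOn hmaps hinj.injOn

end PrimaryPrime

theorem tprod_primaryPrime_dvd {R : Type*} [CommMonoid R] [TopologicalSpace R] (n : primary)
    (g : Zω → R) :
    ∏' π : {π : Zω // Prime π ∧ 3 ∣ π - 1 ∧ π ∣ n}, g π =
      ∏' π : {π : PrimaryPrime // π.toPrimary ∣ n}, g π :=
  let e : {π : Zω // Prime π ∧ 3 ∣ π - 1 ∧ π ∣ n} ≃ {π : PrimaryPrime // π.toPrimary ∣ n} :=
    (Equiv.subtypeEquivRight fun _ => and_assoc.symm).trans <|
      (Equiv.subtypeSubtypeEquivSubtypeInter _ _).symm.trans <|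
        Equiv.subtypeEquivRight fun (π : PrimaryPrime) => coe_dvd_coe (m := π.toPrimary)
  e.tprod_eq fun π => g π

/-! ### The zeta function -/

/-- The parametrization `(k, m) ↦ (λ ^ k * m)` of the nonzero ideals of `ℤ[ω]` by an exponent `k`
and a primary element `m`. -/
noncomputable def lamZPowMulIdeal (x : ℕ × primary) : {I : Ideal Zω // I ≠ ⊥} :=
  ⟨Ideal.span {lamZ ^ x.1 * x.2}, Ideal.span_singleton_eq_bot.not.mpr <|
    mul_ne_zero (pow_ne_zero _ lamZ_ne_zero) (ne_zero_of_mem_primary x.2.2)⟩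

theorem le_of_associated_lamZ_pow_mul {k l : ℕ} {m n : primary}
    (h : Associated (lamZ ^ k * m : Zω) (lamZ ^ l * n)) : l ≤ k := by
  by_contra! hkl
  have hdvd : lamZ ^ k * lamZ ∣ lamZ ^ k * m :=
    (pow_succ lamZ k ▸ (pow_dvd_pow lamZ hkl).mul_right _).trans h.symm.dvd
  exact not_lamZ_dvd_of_mem_primary m.2
    ((mul_dvd_mul_iff_left (pow_ne_zero k lamZ_ne_zero)).mp hdvd)

theorem lamZPowMulIdeal_injective : Function.Injective lamZPowMulIdeal := by
  rintro ⟨k, m⟩ ⟨l, n⟩ h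
  have hassoc : Associated (lamZ ^ k * m : Zω) (lamZ ^ l * n) :=
    Ideal.span_singleton_eq_span_singleton.mp (congrArg Subtype.val h)
  obtain rfl : k = l := le_antisymm (le_of_associated_lamZ_pow_mul hassoc.symm)
    (le_of_associated_lamZ_pow_mul hassoc)
  have hmn : Associated (m : Zω) n :=
    hassoc.of_mul_left (Associated.refl _) (pow_ne_zero k lamZ_ne_zero)
  rw [eq_of_associated hmn]

theorem lamZPowMulIdeal_surjective : Function.Surjective lamZPowMulIdeal := by
  rintro ⟨I, hI⟩
  obtain ⟨a, rfl⟩ := IsPrincipalIdealRing.principal I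
  have ha : a ≠ 0 := fun h => hI (Ideal.span_singleton_eq_bot.mpr h)
  obtain ⟨k, z, hz, rfl⟩ := WfDvdMonoid.max_power_factor' ha not_isUnit_lamZ
  obtain ⟨m, hm⟩ := exists_primary_associated hz
  exact ⟨(k, m), Subtype.ext <| Ideal.span_singleton_eq_span_singleton.mpr <|
    (hm.mul_left _).symm⟩

theorem summable_norm_normCpow_primary {s : ℂ} (hs : s.re < -1) :
    Summable fun m : primary => ‖normCpow s m‖ :=
  ((summable_Nm_rpow hs).comp_injective Subtype.val_injective).congr fun m =>
    (norm_normCpow s (ne_zero_of_mem_primary m.2)).symm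

theorem normCpow_lamZ (s : ℂ) : normCpow s lamZ = 3 ^ s := by
  rw [normCpow_apply, Nm_lamZ, ofReal_ofNat]

theorem norm_normCpow_lamZ_lt_one {s : ℂ} (hs : s.re < 0) : ‖normCpow s lamZ‖ < 1 := by
  rw [norm_normCpow s lamZ_ne_zero, Nm_lamZ]
  exact Real.rpow_lt_one_of_one_lt_of_neg (by norm_num) hs

theorem one_sub_three_cpow_mul_tsum_ideal {s : ℂ} (hs : s.re < -1) :
    (1 - 3 ^ s) * ∑' I : {I : Ideal Zω // I ≠ ⊥}, (Nat.card (Zω ⧸ I.1) : ℂ) ^ s =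
      ∑' m : primary, normCpow s m := by
  have hlam := norm_normCpow_lamZ_lt_one (s := s) (by linarith)
  have hterm (x : ℕ × primary) : (Nat.card (Zω ⧸ (lamZPowMulIdeal x).1) : ℂ) ^ s =
      normCpow s lamZ ^ x.1 * normCpow s x.2 := by
    rw [← map_pow, ← map_mul, normCpow_apply, ← card_quotient_span_singleton, ofReal_natCast]
    rfl
  have hne : 1 - normCpow s lamZ ≠ 0 := sub_ne_zero.mpr fun h => by simp [← h] at hlam
  rw [← (Equiv.ofBijective _ ⟨lamZPowMulIdeal_injective, lamZPowMulIdeal_surjective⟩).tsum_eq,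
    ← normCpow_lamZ]
  calc (1 - normCpow s lamZ) * ∑' x, (Nat.card (Zω ⧸ (lamZPowMulIdeal x).1) : ℂ) ^ s
      = (1 - normCpow s lamZ) *
          ((∑' k : ℕ, normCpow s lamZ ^ k) * ∑' m : primary, normCpow s m) := by
        rw [tsum_mul_tsum_of_summable_norm (summable_norm_geometric_of_norm_lt_one hlam)
          (summable_norm_normCpow_primary hs), tsum_congr hterm]
    _ = ∑' m : primary, normCpow s m := by
        rw [tsum_geometric_of_norm_lt_one hlam, mul_inv_cancel_left₀ hne]

theorem Nm_add_one_ne_zero (x : Zω) : (Nm x : ℂ) + 1 ≠ 0 := by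
  exact_mod_cast (add_pos_of_nonneg_of_pos (Nm_nonneg x) one_pos).ne'

theorem one_add_inv_Nm_inv {x : Zω} (hx : x ≠ 0) :
    (1 + (Nm x : ℂ)⁻¹)⁻¹ = 1 + -((Nm x : ℂ) + 1)⁻¹ := by
  have h0 : (Nm x : ℂ) ≠ 0 := ofReal_ne_zero.mpr (Nm_eq_zero.not.mpr hx)
  have h1 := Nm_add_one_ne_zero x
  field

theorem norm_inv_Nm_add_one_le_one (x : Zω) : ‖((Nm x : ℂ) + 1)⁻¹‖ ≤ 1 := by
  have hx := Nm_nonneg x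
  rw [← ofReal_one, ← ofReal_add, norm_inv, norm_real, Real.norm_of_nonneg (by positivity)]
  exact inv_le_one_of_one_le₀ (by linarith)

theorem summable_norm_normCpow_primaryPrime_mul_inv {s : ℂ} (hs : s.re < -1) :
    Summable fun π : PrimaryPrime => ‖normCpow s π.1 * -((Nm π.1 : ℂ) + 1)⁻¹‖ := by
  refine .of_nonneg_of_le (fun _ => norm_nonneg _) (fun π => ?_)
    ((summable_norm_normCpow_primary hs).comp_injective PrimaryPrime.toPrimary_injective)
  rw [norm_mul, norm_neg]
  exact mul_le_of_le_one_right (norm_nonneg _) (norm_inv_Nm_add_one_le_one _)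

end Zω

open Complex in
/-- for `Re(s) > 1`, the Dirichlet series
`Z(s) = Σ_{m ≡ 1 (3)} N(m)^{-s} ∏_{π ≡ 1 (3), π ∣ m} (1 + N(π)^{-1})⁻¹` satisfies
`Z(s) = (1 - 3^{-s}) ζ_{ℚ(ω)}(s) ∏_{π ≡ 1 (3)} (1 - 1/(N(π)^s (N(π)+1)))`. -/
theorem Z_series_factorization (s : ℂ) (hs : 1 < s.re) :
    ∑' m : {m : Zω // (3 : Zω) ∣ (m - 1)},
        (Nm m.1 : ℂ) ^ (-s) *
          ∏' π : {π : Zω // Prime π ∧ (3 : Zω) ∣ (π - 1) ∧ π ∣ m.1},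
            (1 + (Nm π.1 : ℂ)⁻¹)⁻¹ =
      (1 - (3 : ℂ) ^ (-s)) *
        (∑' I : {I : Ideal Zω // I ≠ ⊥}, (Nat.card (Zω ⧸ I.1) : ℂ) ^ (-s)) *
        ∏' π : {π : Zω // Prime π ∧ (3 : Zω) ∣ (π - 1)},
          (1 - 1 / ((Nm π.1 : ℂ) ^ s * ((Nm π.1 : ℂ) + 1))) := by
  have hs' : (-s).re < -1 := by rw [neg_re]; linarith
  calc
    _ = ∑' m : Zω.primary, Zω.normCpow (-s) m *
          ∏' π : {π : Zω.PrimaryPrime // π.toPrimary ∣ m}, (1 + -((Nm π.1 : ℂ) + 1)⁻¹) :=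
        tsum_congr fun m => congrArg _ <|
          (Zω.tprod_primaryPrime_dvd m fun x => (1 + (Nm x : ℂ)⁻¹)⁻¹).trans <|
            tprod_congr fun π => Zω.one_add_inv_Nm_inv π.1.2.1.ne_zero
    _ = (∑' m : Zω.primary, Zω.normCpow (-s) m) *
          ∏' π : Zω.PrimaryPrime, (1 + Zω.normCpow (-s) π * -((Nm π : ℂ) + 1)⁻¹) :=
        tsum_mul_tprod_dvd ((Zω.normCpow (-s)).comp Zω.primary.subtype)
          (b := fun π : Zω.PrimaryPrime => -((Nm π : ℂ) + 1)⁻¹)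
          Zω.PrimaryPrime.prod_toPrimary_dvd Zω.PrimaryPrime.finite_setOf_toPrimary_dvd
          (Zω.summable_norm_normCpow_primary hs')
          (Zω.summable_norm_normCpow_primaryPrime_mul_inv hs')
    _ = _ := by
        rw [← Zω.one_sub_three_cpow_mul_tsum_ideal hs']
        exact congrArg _ <| tprod_congr fun π => by
          rw [Zω.normCpow_apply, cpow_neg, one_div, mul_inv, mul_neg, ← sub_eq_add_neg]
end

section
/- Let σ(d) = Σ_{e | d, e ≡ 1 (mod 3)} N(e) be the sum-of-divisors function on ℤ[ω]. For squarefree elements, Σ_{d squarefree, d ≡ 1 (mod 3), gcd(d,r)=1} μ(d)/(N(d)·σ(d)) · ∏_{π|d}(1 − N(π)^{−2})^{−1} · Σ_{c|d} μ(c)/N(c) = ∏_{π ≡ 1 (mod 3)} (1 − 1/(N(π)+1)²) · ∏_{π | r} (1 − 1/(N(π)+1)²)^{−1}. -/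
open Complex

noncomputable section

/-- The sum-of-primary-divisors function `σ(d) = Σ_{e ∣ d, e ≡ 1 (mod 3)} N(e)` on `ℤ[ω]`. -/
def sigmaC (d : Zω) : ℂ :=
  ∑' e : {e : Zω // (3 : Zω) ∣ (e - 1) ∧ e ∣ d}, (Nm e.1 : ℂ)

/-!
A primary squarefree `d` is a product of distinct primary primes in exactly one way, and it is
coprime to `r` exactly when none of these primes divides `r`. Every constituent of the summand is
multiplicative along such a product; with `σ(π) = 1 + N` and `1 - N⁻² = (N - 1)(N + 1) / N²`,
where `N = N(π)`, the summand at `d` becomes `∏_{π ∣ d} -1 / (N(π) + 1)²`. The series is therefore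
the expansion of the Euler product over `π ∤ r`. That product converges absolutely, because
`∑ N(a)⁻²` does, and the factors at `π ∣ r` are removed from the full product by division.
-/

section PrimeFamily

variable {ι M R : Type*}

theorem prime_dvd_prod_iff_mem [CommMonoidWithZero M] {p : ι → M} (hp : ∀ i, Prime (p i))
    (hdvd : ∀ i j, p i ∣ p j → i = j) {i : ι} {s : Finset ι} : p i ∣ ∏ j ∈ s, p j ↔ i ∈ s := by
  refine ⟨fun h ↦ ?_, fun h ↦ Finset.dvd_prod_of_mem p h⟩
  obtain ⟨j, hj, hij⟩ := (hp i).dvd_finsetProd_iff p |>.1 h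
  exact hdvd i j hij ▸ hj

theorem prod_prime_dvd_prod_iff_subset [CommMonoidWithZero M] {p : ι → M}
    (hp : ∀ i, Prime (p i)) (hdvd : ∀ i j, p i ∣ p j → i = j) {s t : Finset ι} :
    ∏ i ∈ s, p i ∣ ∏ i ∈ t, p i ↔ s ⊆ t :=
  ⟨fun h _ hi ↦ (prime_dvd_prod_iff_mem hp hdvd).1 ((Finset.dvd_prod_of_mem p hi).trans h),
    Finset.prod_dvd_prod_of_subset s t p⟩

theorem prod_prime_injective [CommMonoidWithZero M] {p : ι → M} (hp : ∀ i, Prime (p i))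
    (hdvd : ∀ i j, p i ∣ p j → i = j) : Function.Injective fun s : Finset ι ↦ ∏ i ∈ s, p i :=
  fun _ _ h ↦ ((prod_prime_dvd_prod_iff_subset hp hdvd).1 h.dvd).antisymm
    ((prod_prime_dvd_prod_iff_subset hp hdvd).1 h.symm.dvd)

theorem isCoprime_prod_prime_left_iff [CommRing R] [IsPrincipalIdealRing R] [IsDomain R]
    {p : ι → R} (hp : ∀ i, Prime (p i)) {s : Finset ι} {r : R} :
    IsCoprime (∏ i ∈ s, p i) r ↔ ∀ i ∈ s, ¬ p i ∣ r := by
  simp only [IsCoprime.prod_left_iff, (hp _).coprime_iff_not_dvd]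

theorem pairwise_isCoprime_prime [CommRing R] [IsPrincipalIdealRing R] [IsDomain R] {p : ι → R}
    (hp : ∀ i, Prime (p i)) (hdvd : ∀ i j, p i ∣ p j → i = j) :
    Pairwise fun i j ↦ IsCoprime (p i) (p j) :=
  fun i j hij ↦ (hp i).coprime_iff_not_dvd.2 fun h ↦ hij (hdvd i j h)

theorem map_prod_of_isCoprime [CommSemiring R] [CommMonoid M] {f : R → M} (map_one : f 1 = 1)
    (map_mul : ∀ a b, IsCoprime a b → f (a * b) = f a * f b) {g : ι → R} {s : Finset ι}
    (hg : (s : Set ι).Pairwise fun i j ↦ IsCoprime (g i) (g j)) :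
    f (∏ i ∈ s, g i) = ∏ i ∈ s, f (g i) := by
  classical
  induction s using Finset.induction_on with
  | empty => simpa using map_one
  | insert i s hi ih =>
    have hcop : IsCoprime (g i) (∏ j ∈ s, g j) := IsCoprime.prod_right fun j hj ↦
      hg (by simp) (by simp [hj]) (by rintro rfl; exact hi hj)
    rw [Finset.prod_insert hi, Finset.prod_insert hi, map_mul _ _ hcop,
      ih (hg.mono (by simp))]

end PrimeFamily

section EulerProduct

variable {ι R : Type*}

theorem tsum_finset_prod_eq_tprod_subtype [NormedCommRing R] [NormOneClass R] [CompleteSpace R]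
    {f : ι → R} (hf : Summable fun i ↦ ‖f i‖) (q : ι → Prop) :
    ∑' s : {s : Finset ι // ∀ i ∈ s, q i}, ∏ i ∈ s.1, f i = ∏' i : {i // q i}, (1 + f i) := by
  rw [tprod_one_add (summable_finsetProd_of_summable_norm (hf.subtype q)),
    ← (Equiv.finsetSubtypeComm q).tsum_eq]
  exact tsum_congr fun s ↦ by simp [Equiv.finsetSubtypeComm]

theorem tprod_not_eq_tprod_mul_tprod_inv [NormedField R] [CompleteSpace R] {f : ι → R}
    (hf : Summable fun i ↦ ‖f i‖) (hf0 : ∀ i, 1 + f i ≠ 0) (q : ι → Prop) :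
    ∏' i : {i // ¬ q i}, (1 + f i) =
      (∏' i, (1 + f i)) * ∏' i : {i // q i}, (1 + f i)⁻¹ := by
  have hmul (q : ι → Prop) : Multipliable fun i : {i // q i} ↦ 1 + f i :=
    multipliable_one_add_of_summable (f := fun i : {i // q i} ↦ f i) (hf.subtype q)
  have hsplit : (∏' i : {i // q i}, (1 + f i)) * ∏' i : {i // ¬ q i}, (1 + f i) =
      ∏' i, (1 + f i) :=
    Multipliable.tprod_mul_tprod_compl (f := fun i ↦ 1 + f i) (s := {i | q i})
      (hmul q) (hmul fun i ↦ ¬ q i)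
  have hne : ∏' i : {i // q i}, (1 + f i) ≠ 0 :=
    tprod_one_add_ne_zero_of_summable (f := fun i : {i // q i} ↦ f i)
      (fun i ↦ hf0 i) (hf.subtype q)
  rw [(hmul q).tprod_inv₀ hne, ← hsplit, mul_comm, inv_mul_cancel_left₀ hne]

end EulerProduct

theorem isPrimitiveRoot_omega : IsPrimitiveRoot ω 3 :=
  Complex.isPrimitiveRoot_exp 3 three_ne_zero

theorem omega_sq : ω ^ 2 = -1 - ω := by
  have h := isPrimitiveRoot_omega.geom_sum_eq_zero (by norm_num)
  simp only [Finset.sum_range_succ, Finset.sum_range_zero] at h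
  linear_combination h

theorem conj_omega : (starRingEnd ℂ) ω = -1 - ω := by
  have h := isPrimitiveRoot_omega.pow_eq_one
  rw [← Complex.inv_eq_conj (isPrimitiveRoot_omega.norm'_eq_one three_ne_zero), ← omega_sq]
  exact inv_eq_of_mul_eq_one_right (by linear_combination h)

theorem omega_im_pos : 0 < ω.im := by
  have harg : (2 * Real.pi * I / 3 : ℂ) = ((2 * Real.pi / 3 : ℝ) : ℂ) * I := by
    push_cast
    ring
  rw [ω, harg, Complex.exp_ofReal_mul_I_im]
  exact Real.sin_pos_of_pos_of_lt_pi (by positivity) (by linarith [Real.pi_pos])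

open IntermediateField in
instance isPrincipalIdealRing_Zω : IsPrincipalIdealRing Zω := by
  set ζ : ℚ⟮ω⟯ := AdjoinSimple.gen ℚ ω
  have hζ : IsPrimitiveRoot ζ 3 := IsPrimitiveRoot.coe_submonoidClass_iff.1 isPrimitiveRoot_omega
  have : IsCyclotomicExtension {3} ℚ ℚ⟮ω⟯ := by
    change IsCyclotomicExtension {3} ℚ ℚ⟮ω⟯.toSubalgebra
    rw [adjoin_simple_toSubalgebra_of_isAlgebraic
      (isPrimitiveRoot_omega.isIntegral three_pos).tower_top.isAlgebraic]
    exact isPrimitiveRoot_omega.adjoin_isCyclotomicExtension ℚ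
  have : NumberField ℚ⟮ω⟯ := IsCyclotomicExtension.numberField {3} ℚ ℚ⟮ω⟯
  have := IsCyclotomicExtension.Rat.three_pid ℚ⟮ω⟯
  let f : ℚ⟮ω⟯ →ₐ[ℤ] ℂ := ℚ⟮ω⟯.val.restrictScalars ℤ
  have hmap : (Algebra.adjoin ℤ {ζ}).map f = subalgebraOfSubring Zω := by
    rw [AlgHom.map_adjoin_singleton, Algebra.adjoin_int]; rfl
  let e := (hζ.adjoinEquivRingOfIntegers.symm.trans
    (Subalgebra.equivMapOfInjective _ f f.injective)).trans (Subalgebra.equivOfEq _ _ hmap)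
  exact IsPrincipalIdealRing.of_surjective (S := Zω) e.toRingHom e.surjective

section EisensteinIntegers

theorem omegaZ_sq : ωZ ^ 2 = -1 - ωZ :=
  Subtype.ext omega_sq

theorem exists_eq_intCast_add_intCast_mul_omegaZ (a : Zω) : ∃ x y : ℤ, a = x + y * ωZ := by
  suffices h : ∀ z ∈ Zω, ∃ x y : ℤ, z = x + y * ω by
    obtain ⟨x, y, hxy⟩ := h a a.2
    exact ⟨x, y, Subtype.ext (by simpa [ωZ] using hxy)⟩
  intro z hz
  induction hz using Subring.closure_induction with
  | mem z hz => exact ⟨0, 1, by simpa using hz⟩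
  | zero => exact ⟨0, 0, by simp⟩
  | one => exact ⟨1, 0, by simp⟩
  | add _ _ _ _ ha hb =>
    obtain ⟨x, y, rfl⟩ := ha
    obtain ⟨u, v, rfl⟩ := hb
    exact ⟨x + u, y + v, by push_cast; ring⟩
  | neg _ _ ha =>
    obtain ⟨x, y, rfl⟩ := ha
    exact ⟨-x, -y, by push_cast; ring⟩
  | mul _ _ _ _ ha hb =>
    obtain ⟨x, y, rfl⟩ := ha
    obtain ⟨u, v, rfl⟩ := hb
    refine ⟨x * u - y * v, x * v + y * u - y * v, ?_⟩
    push_cast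
    linear_combination (y * v : ℂ) * omega_sq

theorem Nm_eq_norm_sq (a : Zω) : Nm a = ‖(a : ℂ)‖ ^ 2 :=
  Complex.normSq_eq_norm_sq _

theorem Nm_mul (a b : Zω) : Nm (a * b) = Nm a * Nm b := by
  simp [Nm]

theorem Nm_prod {ι : Type*} (s : Finset ι) (f : ι → Zω) :
    Nm (∏ i ∈ s, f i) = ∏ i ∈ s, Nm (f i) := by
  simp [Nm]

theorem exists_natCast_eq_Nm_and_dvd (a : Zω) : ∃ n : ℕ, Nm a = n ∧ a ∣ (n : Zω) := by
  obtain ⟨x, y, rfl⟩ := exists_eq_intCast_add_intCast_mul_omegaZ a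
  have hnonneg : 0 ≤ x ^ 2 - x * y + y ^ 2 := by
    nlinarith [sq_nonneg (x - y), sq_nonneg x, sq_nonneg y]
  obtain ⟨n, hn⟩ := Int.eq_ofNat_of_zero_le hnonneg
  refine ⟨n, ?_, x - y - y * ωZ, ?_⟩
  · have hnC : ((x : ℂ) ^ 2 - x * y + y ^ 2) = n := by exact_mod_cast hn
    have hcoe : ((x + y * ωZ : Zω) : ℂ) = x + y * ω := by simp [ωZ]
    rw [Nm, hcoe, ← Complex.ofReal_inj, Complex.normSq_eq_conj_mul_self]
    simp only [map_add, map_mul, map_intCast, conj_omega, Complex.ofReal_natCast]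
    linear_combination hnC - (y : ℂ) ^ 2 * omega_sq
  · have hnZ : ((x : Zω) ^ 2 - x * y + y ^ 2) = n := by
      exact_mod_cast congrArg (Int.cast : ℤ → Zω) hn
    linear_combination -hnZ + (y : Zω) ^ 2 * omegaZ_sq

theorem one_le_Nm {a : Zω} (ha : a ≠ 0) : 1 ≤ Nm a := by
  obtain ⟨n, hn, -⟩ := exists_natCast_eq_Nm_and_dvd a
  have hpos : 0 < Nm a := Complex.normSq_pos.2 (by simpa using ha)
  rw [hn] at hpos ⊢
  exact_mod_cast hpos

theorem isUnit_iff_Nm_eq_one {a : Zω} : IsUnit a ↔ Nm a = 1 := by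
  constructor
  · rintro ⟨u, rfl⟩
    have hmul : Nm u * Nm ↑u⁻¹ = 1 := by
      rw [← Nm_mul, u.mul_inv]
      simp [Nm]
    nlinarith [one_le_Nm u.ne_zero, one_le_Nm u⁻¹.ne_zero]
  · intro ha
    obtain ⟨n, hn, hdvd⟩ := exists_natCast_eq_Nm_and_dvd a
    obtain rfl : n = 1 := by exact_mod_cast hn.symm.trans ha
    exact isUnit_of_dvd_one (by simpa using hdvd)

theorem one_lt_Nm_of_prime {π : Zω} (hπ : Prime π) : 1 < Nm π :=
  (one_le_Nm hπ.ne_zero).lt_of_ne fun h ↦ hπ.not_isUnit (isUnit_iff_Nm_eq_one.2 h.symm)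

-- `N(x + yω)⁻²` is the absolute value of a term of the Eisenstein series of weight 4 at `ω`.
theorem summable_inv_Nm_sq : Summable fun a : Zω ↦ (Nm a ^ 2)⁻¹ := by
  choose x y hxy using exists_eq_intCast_add_intCast_mul_omegaZ
  have hinj : Function.Injective fun a ↦ ![y a, x a] := fun a b hab ↦ by
    rw [hxy a, hxy b, show x a = x b from congrFun hab 1, show y a = y b from congrFun hab 0]
  have hEis := (EisensteinSeries.summable_norm_eisSummand (k := 4) (by norm_num)
    ⟨ω, omega_im_pos⟩).comp_injective hinj
  refine hEis.congr fun a ↦ ?_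
  have ha : (a : ℂ) = y a * ω + x a := by
    conv_lhs => rw [hxy a]
    simp [ωZ, add_comm]
  simp [EisensteinSeries.eisSummand, Nm_eq_norm_sq, ha, ← pow_mul]

theorem lamZ_sq : lamZ ^ 2 = -3 * ωZ := by
  rw [lamZ]
  linear_combination omegaZ_sq

theorem isUnit_omegaZ : IsUnit ωZ :=
  IsUnit.of_mul_eq_one (-1 - ωZ) (by linear_combination -omegaZ_sq)

theorem lamZ_dvd_three : lamZ ∣ 3 :=
  ⟨2 + ωZ, by rw [lamZ]; linear_combination omegaZ_sq⟩

theorem Nm_three : Nm 3 = 9 := by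
  have hcoe : ((3 : Zω) : ℂ) = 3 := rfl
  norm_num [Nm, hcoe]

theorem not_isUnit_lamZ : ¬ IsUnit lamZ := by
  intro h
  have h3 : IsUnit (-3 * ωZ) := lamZ_sq ▸ h.pow 2
  have h9 := isUnit_iff_Nm_eq_one.1 (isUnit_of_mul_isUnit_left h3).neg
  rw [neg_neg, Nm_three] at h9
  norm_num at h9

theorem lamZ_dvd_or_dvd_sub_one_or_dvd_add_one (a : Zω) :
    lamZ ∣ a ∨ lamZ ∣ a - 1 ∨ lamZ ∣ a + 1 := by
  obtain ⟨x, y, rfl⟩ := exists_eq_intCast_add_intCast_mul_omegaZ a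
  have hdvd (e : ℤ) (he : 3 ∣ x + y + e) : lamZ ∣ x + y * ωZ + e := by
    have h : lamZ ∣ ((x + y + e : ℤ) : Zω) :=
      lamZ_dvd_three.trans (by exact_mod_cast map_dvd (Int.castRingHom Zω) he)
    have heq : x + y * ωZ + e = ((x + y + e : ℤ) : Zω) - y * lamZ := by
      rw [lamZ]
      push_cast
      ring
    exact heq ▸ h.sub (dvd_mul_left lamZ (y : Zω))
  obtain h | h | h : 3 ∣ x + y + 0 ∨ 3 ∣ x + y + -1 ∨ 3 ∣ x + y + 1 := by omega
  · exact .inl (by simpa using hdvd 0 h)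
  · exact .inr (.inl (by simpa [sub_eq_add_neg] using hdvd (-1) h))
  · exact .inr (.inr (by simpa using hdvd 1 h))

end EisensteinIntegers

/-- The submonoid of primary elements, those congruent to `1` modulo `3`: they represent the
associate classes of elements prime to `3`, in a way compatible with products. -/
def primary : Submonoid Zω where
  carrier := {a | 3 ∣ a - 1}
  one_mem' := by simp
  mul_mem' {a b} ha hb := by
    rw [Set.mem_ofPred_eq, show a * b - 1 = (a - 1) * b + (b - 1) by ring]
    exact (ha.mul_right b).add hb

theorem mem_primary_of_mul_mem_primary {a b : Zω} (ha : a ∈ primary) (hab : a * b ∈ primary) :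
    b ∈ primary := by
  change 3 ∣ b - 1
  rw [show b - 1 = (a * b - 1) - (a - 1) * b by ring]
  exact hab.sub (ha.mul_right b)

theorem not_lamZ_dvd_of_mem_primary {a : Zω} (ha : a ∈ primary) : ¬ lamZ ∣ a := fun h ↦
  not_isUnit_lamZ (isUnit_of_dvd_one (by simpa using h.sub (lamZ_dvd_three.trans ha)))

theorem eq_one_of_isUnit_of_mem_primary {u : Zω} (hu : IsUnit u) (hu' : u ∈ primary) : u = 1 := by
  obtain ⟨v, hv⟩ := hu'
  by_contra hne
  have hv0 : v ≠ 0 := by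
    rintro rfl
    exact hne (by linear_combination hv)
  have hu1 : ‖(u : ℂ)‖ = 1 :=
    (pow_eq_one_iff_of_nonneg (norm_nonneg _) two_ne_zero).1 <|
      (Nm_eq_norm_sq u).symm.trans (isUnit_iff_Nm_eq_one.1 hu)
  have hv1 : 1 ≤ ‖(v : ℂ)‖ :=
    (one_le_sq_iff₀ (norm_nonneg _)).1 (Nm_eq_norm_sq v ▸ one_le_Nm hv0)
  have hsub : (u : ℂ) - 1 = 3 * v := congrArg Subtype.val hv
  have hle := norm_sub_le (u : ℂ) 1
  rw [hsub, norm_mul, hu1, norm_one, Complex.norm_ofNat] at hle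
  linarith

-- Since `ω = 1 - λ` and `3` is associated to `λ²`, multiplying `1 + bλ` by `ω` lowers `b` by `1`
-- modulo `λ` and keeps it in the form `1 + bλ`.
theorem exists_isUnit_mul_mem_primary_of_lamZ_dvd_sub_one {a : Zω} (ha : lamZ ∣ a - 1) :
    ∃ u, IsUnit u ∧ u * a ∈ primary := by
  obtain ⟨b, hb⟩ := ha
  have hlam : lamZ = 1 - ωZ := rfl
  obtain ⟨c, hc⟩ | ⟨c, hc⟩ | ⟨c, hc⟩ := lamZ_dvd_or_dvd_sub_one_or_dvd_add_one b
  · exact ⟨1, isUnit_one, -ωZ * c, by linear_combination hb + lamZ * hc + c * lamZ_sq⟩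
  · exact ⟨ωZ, isUnit_omegaZ, ωZ - ωZ ^ 2 * c, by
      linear_combination ωZ * (hb + lamZ * hc + c * lamZ_sq) + ωZ * hlam - omegaZ_sq⟩
  · exact ⟨ωZ ^ 2, isUnit_omegaZ.pow 2, -ωZ ^ 3 * c, by
      linear_combination ωZ ^ 2 * (hb + lamZ * hc + c * lamZ_sq) - ωZ ^ 2 * hlam +
        (ωZ - 1) * omegaZ_sq⟩

theorem exists_isUnit_mul_mem_primary {a : Zω} (ha : ¬ lamZ ∣ a) :
    ∃ u, IsUnit u ∧ u * a ∈ primary := by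
  obtain h | h | h := lamZ_dvd_or_dvd_sub_one_or_dvd_add_one a
  · exact absurd h ha
  · exact exists_isUnit_mul_mem_primary_of_lamZ_dvd_sub_one h
  · obtain ⟨u, hu, hua⟩ := exists_isUnit_mul_mem_primary_of_lamZ_dvd_sub_one (a := -a)
      (by rw [← dvd_neg]; convert h using 1; ring)
    exact ⟨-u, hu.neg, by simpa using hua⟩

theorem eq_of_associated_of_mem_primary {a b : Zω} (hab : Associated a b) (ha : a ∈ primary)
    (hb : b ∈ primary) : a = b := by
  obtain ⟨u, rfl⟩ := hab
  rw [eq_one_of_isUnit_of_mem_primary u.isUnit (mem_primary_of_mul_mem_primary ha hb), mul_one]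

/-- Primes `π ≡ 1 (mod 3)`, which represent the prime ideals of `ℤ[ω]` not dividing `3`. The
condition is spelled out so that the index types of the theorem's products unfold to this one. -/
abbrev PrimaryPrime : Type :=
  {π : Zω // Prime π ∧ 3 ∣ π - 1}

namespace PrimaryPrime

theorem prime (π : PrimaryPrime) : Prime π.1 :=
  π.2.1

theorem eq_of_dvd (π ρ : PrimaryPrime) (h : π.1 ∣ ρ.1) : π = ρ :=
  Subtype.ext <| eq_of_associated_of_mem_primary ((π.prime.dvd_prime_iff_associated ρ.prime).1 h)
    π.2.2 ρ.2.2

theorem dvd_prod_iff_mem {π : PrimaryPrime} {s : Finset PrimaryPrime} :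
    π.1 ∣ ∏ ρ ∈ s, ρ.1 ↔ π ∈ s :=
  prime_dvd_prod_iff_mem prime eq_of_dvd

theorem prod_dvd_prod_iff_subset {s t : Finset PrimaryPrime} :
    ∏ π ∈ s, π.1 ∣ ∏ π ∈ t, π.1 ↔ s ⊆ t :=
  prod_prime_dvd_prod_iff_subset prime eq_of_dvd

theorem pairwise_isCoprime : Pairwise fun π ρ : PrimaryPrime ↦ IsCoprime π.1 ρ.1 :=
  pairwise_isCoprime_prime prime eq_of_dvd

theorem squarefree_prod (s : Finset PrimaryPrime) : Squarefree (∏ π ∈ s, π.1) :=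
  Finset.squarefree_prod_of_pairwise_isCoprime
    ((pairwise_isCoprime.mono fun _ _ h ↦ h.isRelPrime).set_pairwise _)
    fun π _ ↦ π.prime.squarefree

theorem prod_mem_primary (s : Finset PrimaryPrime) : ∏ π ∈ s, π.1 ∈ primary :=
  primary.prod_mem fun π _ ↦ π.2.2

theorem exists_associated {p : Zω} (hp : Prime p) (hlam : ¬ lamZ ∣ p) :
    ∃ π : PrimaryPrime, Associated π.1 p := by
  obtain ⟨u, hu, hup⟩ := exists_isUnit_mul_mem_primary hlam
  have hassoc : Associated (u * p) p := associated_unit_mul_left p u hu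
  exact ⟨⟨u * p, hassoc.symm.prime hp, hup⟩, hassoc⟩

theorem exists_associated_prod {d : Zω} (hd : Squarefree d) (hlam : ¬ lamZ ∣ d) :
    ∃ s : Finset PrimaryPrime, Associated (∏ π ∈ s, π.1) d := by
  classical
  induction d using UniqueFactorizationMonoid.induction_on_prime with
  | h₁ => exact absurd (dvd_zero lamZ) hlam
  | h₂ u hu => exact ⟨∅, by simpa using (associated_one_iff_isUnit.2 hu).symm⟩
  | h₃ a p _ hp ih =>
    obtain ⟨s, hs⟩ := ih hd.of_mul_right fun h ↦ hlam (h.mul_left p)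
    obtain ⟨π, hπ⟩ := exists_associated hp fun h ↦ hlam (h.mul_right a)
    have hnotMem : π ∉ s := fun h ↦ hp.not_isUnit <| hd p <| mul_dvd_mul_left p <|
      hπ.symm.dvd.trans <| (dvd_prod_iff_mem.2 h).trans hs.dvd
    exact ⟨insert π s, by simpa [Finset.prod_insert hnotMem] using hπ.mul_mul hs⟩

theorem exists_prod_eq {d : Zω} (hd : Squarefree d) (hd' : d ∈ primary) :
    ∃ s : Finset PrimaryPrime, ∏ π ∈ s, π.1 = d :=
  let ⟨s, hs⟩ := exists_associated_prod hd (not_lamZ_dvd_of_mem_primary hd')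
  ⟨s, eq_of_associated_of_mem_primary hs (prod_mem_primary s) hd'⟩

theorem summable_inv_Nm_sq : Summable fun π : PrimaryPrime ↦ (Nm π.1 ^ 2)⁻¹ :=
  _root_.summable_inv_Nm_sq.subtype _

end PrimaryPrime

theorem tsum_subtype_squarefree_primary {α : Type*} [AddCommMonoid α] [TopologicalSpace α]
    {Q : Zω → Prop} {S : Finset PrimaryPrime → Prop}
    (hQ : ∀ d, Q d → Squarefree d ∧ d ∈ primary) (hS : ∀ s, Q (∏ π ∈ s, π.1) ↔ S s)
    (F : {d // Q d} → α) :
    ∑' d, F d = ∑' s : {s // S s}, F ⟨∏ π ∈ s.1, π.1, (hS s).2 s.2⟩ := by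
  let e : {s // S s} → {d // Q d} := fun s ↦ ⟨∏ π ∈ s.1, π.1, (hS s).2 s.2⟩
  have he : Function.Bijective e := by
    refine ⟨fun s t hst ↦ Subtype.ext ?_, fun ⟨d, hd⟩ ↦ ?_⟩
    · exact prod_prime_injective PrimaryPrime.prime PrimaryPrime.eq_of_dvd
        (congrArg Subtype.val hst)
    · obtain ⟨s, rfl⟩ := PrimaryPrime.exists_prod_eq (hQ d hd).1 (hQ d hd).2
      exact ⟨⟨s, (hS s).1 hd⟩, rfl⟩
  exact ((Equiv.ofBijective e he).tsum_eq F).symm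

theorem tsum_primary_dvd_prod {α : Type*} [CommSemiring α] [TopologicalSpace α] {g : Zω → α}
    (hg : ∀ s : Finset PrimaryPrime, g (∏ π ∈ s, π.1) = ∏ π ∈ s, g π) (s : Finset PrimaryPrime) :
    ∑' c : {c : Zω // 3 ∣ c - 1 ∧ c ∣ ∏ π ∈ s, π.1}, g c = ∏ π ∈ s, (1 + g π) := by
  have hS (t : Finset PrimaryPrime) :
      (3 ∣ ∏ π ∈ t, π.1 - 1 ∧ ∏ π ∈ t, π.1 ∣ ∏ π ∈ s, π.1) ↔ t ∈ s.powerset := by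
    rw [PrimaryPrime.prod_dvd_prod_iff_subset, Finset.mem_powerset]
    exact and_iff_right (PrimaryPrime.prod_mem_primary t)
  rw [tsum_subtype_squarefree_primary (fun c hc ↦
      ⟨(PrimaryPrime.squarefree_prod s).squarefree_of_dvd hc.2, hc.1⟩) hS,
    Finset.tsum_subtype s.powerset fun t ↦ g (∏ π ∈ t, π.1), Finset.prod_one_add]
  exact Finset.sum_congr rfl fun t _ ↦ hg t

theorem tprod_primaryPrime_dvd {α : Type*} [CommMonoid α] [TopologicalSpace α] (f : Zω → α)
    (r : Zω) :
    ∏' π : {π : Zω // Prime π ∧ 3 ∣ π - 1 ∧ π ∣ r}, f π =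
      ∏' π : {π : PrimaryPrime // π.1 ∣ r}, f π := by
  let e : {π : Zω // Prime π ∧ 3 ∣ π - 1 ∧ π ∣ r} ≃ {π : PrimaryPrime // π.1 ∣ r} :=
    (Equiv.subtypeEquivRight fun _ ↦ and_assoc.symm).trans
      (Equiv.subtypeSubtypeEquivSubtypeInter (fun π : Zω ↦ Prime π ∧ 3 ∣ π - 1) (· ∣ r)).symm
  exact e.tprod_eq fun π ↦ f π

theorem tprod_primaryPrime_dvd_prod {α : Type*} [CommMonoid α] [TopologicalSpace α] (f : Zω → α)
    (s : Finset PrimaryPrime) :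
    ∏' π : {π : Zω // Prime π ∧ 3 ∣ π - 1 ∧ π ∣ ∏ ρ ∈ s, ρ.1}, f π = ∏ π ∈ s, f π := by
  rw [tprod_primaryPrime_dvd, ← Finset.tprod_subtype s fun π ↦ f π]
  exact (Equiv.subtypeEquivRight fun _ ↦ PrimaryPrime.dvd_prod_iff_mem).tprod_eq
    fun π : {π // π ∈ s} ↦ f π

theorem sigmaC_prod (s : Finset PrimaryPrime) :
    sigmaC (∏ π ∈ s, π.1) = ∏ π ∈ s, (1 + (Nm π.1 : ℂ)) :=
  tsum_primary_dvd_prod (g := fun a ↦ (Nm a : ℂ)) (fun s ↦ by simp [Nm_prod]) s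

theorem IsMoebiusZω.apply_prod {μ : Zω → ℤ} (hμ : IsMoebiusZω μ) (s : Finset PrimaryPrime) :
    μ (∏ π ∈ s, π.1) = ∏ _π ∈ s, (-1) := by
  obtain ⟨map_one, -, map_mul, map_prime⟩ := hμ
  rw [map_prod_of_isCoprime map_one map_mul (PrimaryPrime.pairwise_isCoprime.set_pairwise _)]
  exact Finset.prod_congr rfl fun π _ ↦ map_prime π π.prime

theorem IsMoebiusZω.tsum_div_Nm {μ : Zω → ℤ} (hμ : IsMoebiusZω μ) (s : Finset PrimaryPrime) :
    ∑' c : {c : Zω // 3 ∣ c - 1 ∧ c ∣ ∏ π ∈ s, π.1}, (μ c : ℂ) / (Nm c : ℂ) =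
      ∏ π ∈ s, (1 - 1 / (Nm π.1 : ℂ)) := by
  rw [tsum_primary_dvd_prod (g := fun c ↦ (μ c : ℂ) / (Nm c : ℂ))]
  · exact Finset.prod_congr rfl fun π _ ↦ by rw [hμ.2.2.2 π π.prime]; push_cast; ring
  · intro t
    rw [Finset.prod_div_distrib, hμ.apply_prod, Nm_prod]
    push_cast
    congr 1
    exact Finset.prod_congr rfl fun π _ ↦ by rw [hμ.2.2.2 π π.prime]; simp

theorem euler_factor_identity {K : Type*} [Field K] {n : K} (hn0 : n ≠ 0) (hn1 : n - 1 ≠ 0)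
    (hn2 : n + 1 ≠ 0) :
    -1 / (n * (1 + n)) * (1 - n ^ (-2 : ℤ))⁻¹ * (1 - 1 / n) = -(1 / (n + 1) ^ 2) := by
  have h : 1 - n ^ (-2 : ℤ) = (n - 1) * (n + 1) / n ^ 2 := by
    rw [zpow_neg, zpow_ofNat]; field_simp; ring
  rw [h, add_comm 1 n]
  field_simp

/-- The summand of the series at a prime `a`; the Euler factor there is `1 + eulerTerm a`. -/
def eulerTerm (a : Zω) : ℂ :=
  -(1 / ((Nm a : ℂ) + 1) ^ 2)

theorem norm_eulerTerm (a : Zω) : ‖eulerTerm a‖ = 1 / (Nm a + 1) ^ 2 := by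
  have hN : 0 ≤ Nm a := Complex.normSq_nonneg _
  rw [eulerTerm, norm_neg, norm_div, norm_one, norm_pow]
  norm_cast
  rw [Real.norm_of_nonneg (by positivity)]

theorem summable_norm_eulerTerm : Summable fun π : PrimaryPrime ↦ ‖eulerTerm π‖ := by
  refine (PrimaryPrime.summable_inv_Nm_sq).of_nonneg_of_le (fun _ ↦ norm_nonneg _) fun π ↦ ?_
  have hN := one_lt_Nm_of_prime π.prime
  rw [norm_eulerTerm, one_div]
  gcongr
  linarith

theorem one_add_eulerTerm_ne_zero {a : Zω} (ha : a ≠ 0) : 1 + eulerTerm a ≠ 0 := by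
  have hN := one_le_Nm ha
  have hlt : ‖eulerTerm a‖ < 1 := by
    rw [norm_eulerTerm, div_lt_one (by positivity)]
    nlinarith
  intro h
  rw [← neg_eq_of_add_eq_zero_right h] at hlt
  simp at hlt

theorem moebius_sigma_summand_prod {μ : Zω → ℤ} (hμ : IsMoebiusZω μ) (s : Finset PrimaryPrime) :
    (μ (∏ π ∈ s, π.1) : ℂ) / ((Nm (∏ π ∈ s, π.1) : ℂ) * sigmaC (∏ π ∈ s, π.1)) *
        (∏' π : {π : Zω // Prime π ∧ 3 ∣ π - 1 ∧ π ∣ ∏ ρ ∈ s, ρ.1},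
          (1 - (Nm π.1 : ℂ) ^ (-2 : ℤ))⁻¹) *
        ∑' c : {c : Zω // 3 ∣ c - 1 ∧ c ∣ ∏ π ∈ s, π.1}, (μ c.1 : ℂ) / (Nm c.1 : ℂ) =
      ∏ π ∈ s, eulerTerm π := by
  rw [hμ.apply_prod, Nm_prod, sigmaC_prod, hμ.tsum_div_Nm,
    tprod_primaryPrime_dvd_prod fun π ↦ (1 - (Nm π : ℂ) ^ (-2 : ℤ))⁻¹]
  push_cast
  simp only [← Finset.prod_mul_distrib, ← Finset.prod_div_distrib]
  refine Finset.prod_congr rfl fun π _ ↦ ?_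
  have hN := one_lt_Nm_of_prime π.prime
  exact euler_factor_identity (by exact_mod_cast (by linarith : Nm π.1 ≠ 0))
    (by exact_mod_cast (by linarith : Nm π.1 - 1 ≠ 0))
    (by exact_mod_cast (by linarith : Nm π.1 + 1 ≠ 0))

theorem moebius_sigma_sum_general (μ : Zω → ℤ) (hμ : IsMoebiusZω μ) (r : Zω) :
    ∑' d : {d : Zω // Squarefree d ∧ (3 : Zω) ∣ (d - 1) ∧ IsCoprime d r},
        (μ d.1 : ℂ) / ((Nm d.1 : ℂ) * sigmaC d.1) *
          (∏' π : {π : Zω // Prime π ∧ (3 : Zω) ∣ (π - 1) ∧ π ∣ d.1},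
            (1 - (Nm π.1 : ℂ) ^ (-2 : ℤ))⁻¹) *
          ∑' c : {c : Zω // (3 : Zω) ∣ (c - 1) ∧ c ∣ d.1}, (μ c.1 : ℂ) / (Nm c.1 : ℂ) =
      (∏' π : {π : Zω // Prime π ∧ (3 : Zω) ∣ (π - 1)},
          (1 - 1 / ((Nm π.1 : ℂ) + 1) ^ 2)) *
        ∏' π : {π : Zω // Prime π ∧ (3 : Zω) ∣ (π - 1) ∧ π ∣ r},
          (1 - 1 / ((Nm π.1 : ℂ) + 1) ^ 2)⁻¹ := by
  have hS (s : Finset PrimaryPrime) : (Squarefree (∏ π ∈ s, π.1) ∧ 3 ∣ ∏ π ∈ s, π.1 - 1 ∧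
      IsCoprime (∏ π ∈ s, π.1) r) ↔ ∀ π ∈ s, ¬ π.1 ∣ r := by
    rw [isCoprime_prod_prime_left_iff PrimaryPrime.prime]
    simp only [PrimaryPrime.squarefree_prod s,
      show 3 ∣ ∏ π ∈ s, π.1 - 1 from PrimaryPrime.prod_mem_primary s, true_and]
  rw [tsum_subtype_squarefree_primary (fun d hd ↦ ⟨hd.1, hd.2.1⟩) hS]
  simp only [moebius_sigma_summand_prod hμ]
  rw [tsum_finset_prod_eq_tprod_subtype summable_norm_eulerTerm (¬ ·.1 ∣ r),
    tprod_not_eq_tprod_mul_tprod_inv summable_norm_eulerTerm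
      (fun π ↦ one_add_eulerTerm_ne_zero π.prime.ne_zero) (·.1 ∣ r),
    tprod_primaryPrime_dvd fun π ↦ (1 - 1 / ((Nm π : ℂ) + 1) ^ 2)⁻¹]
  simp only [eulerTerm, sub_eq_add_neg]

open Complex in
/-- for `r ≡ 1 (mod 3)`,
`Σ_{d SF, d ≡ 1 (3), (d,r)=1} μ(d)/(N(d)σ(d)) ∏_{π∣d}(1-N(π)^{-2})⁻¹ Σ_{c∣d} μ(c)/N(c)`
`= ∏_{π ≡ 1 (3)} (1 - 1/(N(π)+1)²) ∏_{π ∣ r} (1 - 1/(N(π)+1)²)⁻¹`. -/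
theorem moebius_sigma_sum (μ : Zω → ℤ) (hμ : IsMoebiusZω μ)
    (r : Zω) (hr : (3 : Zω) ∣ (r - 1)) (hr0 : r ≠ 0) :
    ∑' d : {d : Zω // Squarefree d ∧ (3 : Zω) ∣ (d - 1) ∧ IsCoprime d r},
        (μ d.1 : ℂ) / ((Nm d.1 : ℂ) * sigmaC d.1) *
          (∏' π : {π : Zω // Prime π ∧ (3 : Zω) ∣ (π - 1) ∧ π ∣ d.1},
            (1 - (Nm π.1 : ℂ) ^ (-2 : ℤ))⁻¹) *
          ∑' c : {c : Zω // (3 : Zω) ∣ (c - 1) ∧ c ∣ d.1}, (μ c.1 : ℂ) / (Nm c.1 : ℂ) =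
      (∏' π : {π : Zω // Prime π ∧ (3 : Zω) ∣ (π - 1)},
          (1 - 1 / ((Nm π.1 : ℂ) + 1) ^ 2)) *
        ∏' π : {π : Zω // Prime π ∧ (3 : Zω) ∣ (π - 1) ∧ π ∣ r},
          (1 - 1 / ((Nm π.1 : ℂ) + 1) ^ 2)⁻¹ :=
  moebius_sigma_sum_general μ hμ r

end
end
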